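/- ₃F₂(1/2, 1/2−a, a+1/2; 1−a, a+1; −1) = π² a csc(πa) / (√2 · Γ(5/8−a/2) Γ(7/8−a/2) Γ(a/2+5/8) Γ(a/2+7/8)) for every real a with 0 < a < 1/2. -/

import Mathlib

noncomputable def poch (a : ℝ) (n : ℕ) : ℝ := ∏ i ∈ Finset.range n, (a + i)

/-!
Whipple's quadratic transformation, with `a = 1/2`, carries the series at `-1` to one at
`-4z/(1 - z)² = 1`. Near `0` the transformation follows by expanding the powers of `1 - z` on its
right-hand side into binomial series: the coefficients are then summed by the Pfaff–Saalschütz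
theorem. It extends up to `z = -1` by analyticity on `(-1, 3 - 2√2)`, where `|4z| < (1 - z)²`, and
Abel continuity. The transformed series is `₃F₂(α, 1 - α, c; e, f; 1)` with `e + f = 1 + 2c`, for
which a telescoping contiguous relation gives the product that `(c, e, f) ↦ (c + 2, e + 2, f + 2)`
splits off. Iterating this shift, the remaining series tends to `1` and the products tend to
quotients of Gamma values, which is Whipple's sum.
-/

open Filter Finset Topology
open scoped Nat Real

lemma poch_zero (x : ℝ) : poch x 0 = 1 := prod_range_zero _

lemma poch_succ (x : ℝ) (n : ℕ) : poch x (n + 1) = poch x n * (x + n) :=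
  prod_range_succ _ _

lemma poch_succ_left (x : ℝ) (n : ℕ) : poch x (n + 1) = x * poch (x + 1) n := by
  rw [poch, prod_range_succ', Nat.cast_zero, add_zero, mul_comm]
  congr 1
  exact prod_congr rfl fun i _ => by push_cast; ring

lemma poch_add_one_eq {x : ℝ} (hx : x ≠ 0) (n : ℕ) : poch (x + 1) n = poch x n * (x + n) / x := by
  rw [eq_div_iff hx, mul_comm, ← poch_succ_left, poch_succ]

lemma poch_add (x : ℝ) (m n : ℕ) : poch x (m + n) = poch x m * poch (x + m) n := by
  simp only [poch, prod_range_add, Nat.cast_add, add_assoc]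

lemma poch_two_mul (x : ℝ) (n : ℕ) :
    poch x (2 * n) = 4 ^ n * poch (x / 2) n * poch ((x + 1) / 2) n := by
  induction n with
  | zero => simp [poch_zero]
  | succ n ih =>
    rw [show 2 * (n + 1) = 2 * n + 1 + 1 by ring, poch_succ, poch_succ, poch_succ, poch_succ, ih]
    push_cast
    ring

lemma poch_pos {x : ℝ} (hx : 0 < x) (n : ℕ) : 0 < poch x n :=
  prod_pos fun _ _ => by positivity

lemma ne_neg_natCast_of_pos {x : ℝ} (hx : 0 < x) (m : ℕ) : x ≠ -m :=
  (neg_nonpos.2 m.cast_nonneg |>.trans_lt hx).ne'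

lemma add_natCast_ne_neg {x : ℝ} (hx : ∀ m : ℕ, x ≠ -m) (j m : ℕ) : x + j ≠ -m :=
  fun h => hx (m + j) (by push_cast; linarith)

lemma half_ne_neg_natCast {x : ℝ} (hx : ∀ m : ℕ, x ≠ -m) (m : ℕ) : x / 2 ≠ -m :=
  fun h => hx (2 * m) (by push_cast; linarith)

lemma poch_ne_zero {x : ℝ} (hx : ∀ m : ℕ, x ≠ -m) (n : ℕ) : poch x n ≠ 0 :=
  prod_ne_zero_iff.2 fun m _ => mt eq_neg_of_add_eq_zero_left (hx m)

lemma poch_neg_natCast_of_lt {m n : ℕ} (h : m < n) : poch (-m) n = 0 :=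
  prod_eq_zero (mem_range.2 h) (neg_add_cancel _)

lemma abs_poch_le {x y : ℝ} (h : |x| ≤ y) (n : ℕ) : |poch x n| ≤ poch y n := by
  rw [poch, abs_prod]
  refine prod_le_prod (fun _ _ => abs_nonneg _) fun i _ => ?_
  calc |x + i| ≤ |x| + |(i : ℝ)| := abs_add_le _ _
    _ ≤ y + i := by rw [Nat.abs_cast]; gcongr

lemma poch_eq_eval_ascPochhammer (x : ℝ) (n : ℕ) : poch x n = (ascPochhammer ℝ n).eval x := by
  induction n with
  | zero => simp [poch_zero]
  | succ n ih => rw [poch_succ, ih, ascPochhammer_succ_eval]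

lemma hasSum_poch_div_factorial_mul_pow (b : ℝ) {x : ℝ} (hx : |x| < 1) :
    HasSum (fun n : ℕ => poch b n / n ! * x ^ n) ((1 - x) ^ (-b)) := by
  have h := (Real.one_div_one_sub_rpow_hasFPowerSeriesOnBall_zero b).hasSum (y := x)
    (by simpa [enorm_eq_nnnorm] using! hx)
  have h0 : 0 ≤ 1 - x := by linarith [(abs_lt.1 hx).2]
  rw [zero_add, one_div, ← Real.rpow_neg h0] at h
  refine h.congr_fun fun n => ?_
  rw [FormalMultilinearSeries.ofScalars_apply_eq, smul_eq_mul, ← Ring.multichoose_eq,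
    poch_eq_eval_ascPochhammer, ← Polynomial.ascPochhammer_smeval_eq_eval,
    Polynomial.ascPochhammer_smeval_cast,
    ← Ring.factorial_nsmul_multichoose_eq_ascPochhammer, nsmul_eq_mul,
    mul_div_cancel_left₀ _ (by positivity)]

lemma tendsto_poch_div_rpow_mul_factorial (x : ℝ) :
    Tendsto (fun n : ℕ => poch x n / (n ^ (x - 1) * n !)) atTop (𝓝 (Real.Gamma x)⁻¹) := by
  by_cases hx : ∃ m : ℕ, x = -m
  · obtain ⟨m, rfl⟩ := hx
    rw [Real.Gamma_neg_nat_eq_zero, inv_zero]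
    refine tendsto_const_nhds.congr' ?_
    filter_upwards [eventually_gt_atTop m] with n hn
    rw [poch_neg_natCast_of_lt hn, zero_div]
  · push Not at hx
    have hone : Tendsto (fun n : ℕ => (n : ℝ) / (n + x)) atTop (𝓝 1) :=
      tendsto_natCast_div_add_atTop x
    have h := ((Real.GammaSeq_tendsto_Gamma x).inv₀ (Real.Gamma_ne_zero hx)).mul hone
    rw [mul_one] at h
    refine h.congr' ?_
    filter_upwards [eventually_gt_atTop 0] with n hn
    have hn' : (0 : ℝ) < n := by exact_mod_cast hn
    have hxn : (n : ℝ) + x ≠ 0 := fun h => hx n (by linarith)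
    have hp := poch_succ x n
    rw [Real.GammaSeq, ← poch, hp, Real.rpow_sub_one hn'.ne', add_comm x]
    field_simp

lemma tendsto_poch_mul_poch_div {x y z w : ℝ} (h : x + y = z + w)
    (hz : ∀ m : ℕ, z ≠ -m) (hw : ∀ m : ℕ, w ≠ -m) :
    Tendsto (fun n => poch x n * poch y n / (poch z n * poch w n)) atTop
      (𝓝 (Real.Gamma z * Real.Gamma w / (Real.Gamma x * Real.Gamma y))) := by
  have key := ((tendsto_poch_div_rpow_mul_factorial x).mul
    (tendsto_poch_div_rpow_mul_factorial y)).div ((tendsto_poch_div_rpow_mul_factorial z).mul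
    (tendsto_poch_div_rpow_mul_factorial w)) (by
      simp [Real.Gamma_ne_zero hz, Real.Gamma_ne_zero hw])
  convert key.congr' ?_ using 2
  · field_simp
  filter_upwards [eventually_gt_atTop 0] with n hn
  have hn' : (0 : ℝ) < n := by exact_mod_cast hn
  have := poch_ne_zero hz n
  have := poch_ne_zero hw n
  have hpow : (n : ℝ) ^ (x - 1) * n ^ (y - 1) = n ^ (z - 1) * n ^ (w - 1) := by
    rw [← Real.rpow_add hn', ← Real.rpow_add hn']
    congr 1
    linarith
  simp only [Pi.div_apply]
  field_simp
  linear_combination (-(poch x n * poch y n)) * hpow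

/-- The coefficient of `zⁿ` in `₃F₂(a₁, a₂, a₃; b₁, b₂; z)`. -/
noncomputable def threeF2Coeff (a₁ a₂ a₃ b₁ b₂ : ℝ) (n : ℕ) : ℝ :=
  poch a₁ n * poch a₂ n * poch a₃ n / (poch b₁ n * poch b₂ n * n !)

/-- The generalized hypergeometric series `₃F₂(a₁, a₂, a₃; b₁, b₂; z)`, with value `0` where the
series diverges. -/
noncomputable def threeF2 (a₁ a₂ a₃ b₁ b₂ z : ℝ) : ℝ :=
  ∑' n, threeF2Coeff a₁ a₂ a₃ b₁ b₂ n * z ^ n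

lemma threeF2Coeff_zero (a₁ a₂ a₃ b₁ b₂ : ℝ) : threeF2Coeff a₁ a₂ a₃ b₁ b₂ 0 = 1 := by
  simp [threeF2Coeff, poch_zero]

lemma threeF2Coeff_succ (a₁ a₂ a₃ b₁ b₂ : ℝ) (n : ℕ) :
    threeF2Coeff a₁ a₂ a₃ b₁ b₂ (n + 1) = threeF2Coeff a₁ a₂ a₃ b₁ b₂ n *
      ((a₁ + n) * (a₂ + n) * (a₃ + n) / ((b₁ + n) * (b₂ + n) * (n + 1))) := by
  simp only [threeF2Coeff, poch_succ, Nat.factorial_succ, Nat.cast_mul, Nat.cast_add_one,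
    div_mul_div_comm]
  congr 1 <;> ring

lemma threeF2_lower_comm (a₁ a₂ a₃ b₁ b₂ z : ℝ) :
    threeF2 a₁ a₂ a₃ b₁ b₂ z = threeF2 a₁ a₂ a₃ b₂ b₁ z := by
  simp only [threeF2, threeF2Coeff, mul_comm (poch b₁ _)]

section Convergence

variable (a₁ a₂ a₃ : ℝ) {b₁ b₂ : ℝ}

lemma threeF2Coeff_isBigO (h₁ : ∀ m : ℕ, b₁ ≠ -m) (h₂ : ∀ m : ℕ, b₂ ≠ -m) :
    threeF2Coeff a₁ a₂ a₃ b₁ b₂ =O[atTop] fun n : ℕ => (n : ℝ) ^ (a₁ + a₂ + a₃ - b₁ - b₂ - 1) := by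
  refine Asymptotics.isBigO_of_div_tendsto_nhds ?_
    (Real.Gamma b₁ * Real.Gamma b₂ / (Real.Gamma a₁ * Real.Gamma a₂ * Real.Gamma a₃)) ?_
  · filter_upwards [eventually_gt_atTop 0] with n hn h
    exact absurd h (by positivity)
  have key := (((tendsto_poch_div_rpow_mul_factorial a₁).mul
    (tendsto_poch_div_rpow_mul_factorial a₂)).mul (tendsto_poch_div_rpow_mul_factorial a₃)).div
    ((tendsto_poch_div_rpow_mul_factorial b₁).mul (tendsto_poch_div_rpow_mul_factorial b₂))
    (by simp [Real.Gamma_ne_zero h₁, Real.Gamma_ne_zero h₂])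
  convert key.congr' ?_ using 2
  · field_simp
  filter_upwards [eventually_gt_atTop 0] with n hn
  have hn' : (0 : ℝ) < n := by exact_mod_cast hn
  have := poch_ne_zero h₁ n
  have := poch_ne_zero h₂ n
  have hpow : (n : ℝ) ^ (a₁ - 1) * n ^ (a₂ - 1) * n ^ (a₃ - 1) =
      n ^ (a₁ + a₂ + a₃ - b₁ - b₂ - 1) * (n ^ (b₁ - 1) * n ^ (b₂ - 1)) := by
    simp only [← Real.rpow_add hn']
    congr 1
    ring
  simp only [Pi.div_apply, threeF2Coeff]
  field_simp
  linear_combination (-(poch a₁ n * poch a₂ n * poch a₃ n)) * hpow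

variable {a₁ a₂ a₃}

lemma summable_threeF2Coeff (h₁ : ∀ m : ℕ, b₁ ≠ -m) (h₂ : ∀ m : ℕ, b₂ ≠ -m)
    (hs : a₁ + a₂ + a₃ < b₁ + b₂) : Summable (threeF2Coeff a₁ a₂ a₃ b₁ b₂) :=
  summable_of_isBigO_nat (Real.summable_nat_rpow.2 (by linarith))
    (threeF2Coeff_isBigO a₁ a₂ a₃ h₁ h₂)

lemma tendsto_natCast_mul_threeF2Coeff (h₁ : ∀ m : ℕ, b₁ ≠ -m) (h₂ : ∀ m : ℕ, b₂ ≠ -m)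
    (hs : a₁ + a₂ + a₃ < b₁ + b₂) :
    Tendsto (fun n : ℕ => n * threeF2Coeff a₁ a₂ a₃ b₁ b₂ n) atTop (𝓝 0) := by
  have hlim : Tendsto (fun n : ℕ => (n : ℝ) ^ (-(b₁ + b₂ - (a₁ + a₂ + a₃)))) atTop (𝓝 0) :=
    (tendsto_rpow_neg_atTop (sub_pos.2 hs)).comp tendsto_natCast_atTop_atTop
  refine (((Asymptotics.isBigO_refl (fun n : ℕ => (n : ℝ)) atTop).mul
    (threeF2Coeff_isBigO a₁ a₂ a₃ h₁ h₂)).congr' .rfl ?_).trans_tendsto hlim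
  filter_upwards [eventually_gt_atTop 0] with n hn
  rw [mul_comm, ← Real.rpow_add_one (by positivity)]
  congr 1
  ring

end Convergence

lemma choose_succ_eq_mul_div (n k : ℕ) :
    (n.choose (k + 1) : ℝ) = n.choose k * ((n - k) / (k + 1)) := by
  rw [mul_div_assoc', eq_div_iff (by positivity)]
  rcases le_or_gt k n with h | h
  · exact_mod_cast Nat.choose_succ_right_eq n k
  · simp [Nat.choose_eq_zero_of_lt h, Nat.choose_eq_zero_of_lt (h.trans k.lt_succ_self)]

section Saalschutz

/-- The `k`-th term of the Saalschützian series
`₃F₂(-n, a + n, 1 + a - b - c; 1 + a - b, 1 + a - c; 1)`, multiplied by `(a)ₙ`. -/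
noncomputable def saalschutzTerm (a b c : ℝ) (n k : ℕ) : ℝ :=
  (-1) ^ k * n.choose k * poch a (n + k) * poch (1 + a - b - c) k /
    (poch (1 + a - b) k * poch (1 + a - c) k)

variable {a b c : ℝ}

-- Wilf–Zeilberger: the right-hand side vanishes once `N > n`, leaving a recurrence in `n` for the
-- full sum over `k`.
lemma sum_range_saalschutzTerm_recurrence (hb : ∀ m : ℕ, 1 + a - b ≠ -m)
    (hc : ∀ m : ℕ, 1 + a - c ≠ -m) (n N : ℕ) :
    ∑ k ∈ range (N + 1), ((1 + a - b + n) * (1 + a - c + n) * saalschutzTerm a b c (n + 1) k -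
        (a + n) * (b + n) * (c + n) * saalschutzTerm a b c n k) =
      (2 * n + 1 + a) * (a + n + N) * (1 + a - b - c + N) * saalschutzTerm a b c n N := by
  induction N with
  | zero =>
    simp only [zero_add, range_one, sum_singleton, saalschutzTerm, poch_zero, poch_succ,
      Nat.choose_zero_right, add_zero, CharP.cast_eq_zero]
    ring
  | succ N ih =>
    have hbN : 1 + a - b + N ≠ 0 := mt eq_neg_of_add_eq_zero_left (hb N)
    have hcN : 1 + a - c + N ≠ 0 := mt eq_neg_of_add_eq_zero_left (hc N)
    have := poch_ne_zero hb N
    have := poch_ne_zero hc N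
    rw [sum_range_succ, ih]
    simp only [saalschutzTerm, Nat.choose_succ_succ, Nat.cast_add, choose_succ_eq_mul_div n N,
      show n + 1 + (N + 1) = n + N + 1 + 1 by ring, show n + (N + 1) = n + N + 1 by ring, poch_succ,
      Nat.cast_one]
    field_simp
    ring

lemma sum_saalschutzTerm (hb : ∀ m : ℕ, 1 + a - b ≠ -m) (hc : ∀ m : ℕ, 1 + a - c ≠ -m) (n : ℕ) :
    ∑ k ∈ range (n + 1), saalschutzTerm a b c n k =
      poch a n * poch b n * poch c n / (poch (1 + a - b) n * poch (1 + a - c) n) := by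
  induction n with
  | zero => simp [saalschutzTerm, poch_zero]
  | succ n ih =>
    have hbn : 1 + a - b + n ≠ 0 := mt eq_neg_of_add_eq_zero_left (hb n)
    have hcn : 1 + a - c + n ≠ 0 := mt eq_neg_of_add_eq_zero_left (hc n)
    have hrec := sum_range_saalschutzTerm_recurrence hb hc n (n + 1)
    have hlast : saalschutzTerm a b c n (n + 1) = 0 := by simp [saalschutzTerm]
    rw [sum_sub_distrib, ← mul_sum, ← mul_sum, sum_range_succ (saalschutzTerm a b c n), hlast,
      mul_zero, add_zero, ih, sub_eq_zero] at hrec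
    have := poch_ne_zero hb n
    have := poch_ne_zero hc n
    simp only [poch_succ]
    field_simp at hrec ⊢
    linear_combination hrec

end Saalschutz

section Whipple

variable {α c e f : ℝ}

lemma threeF2Coeff_shift (hc : c ≠ 0) (he : ∀ m : ℕ, e ≠ -m) (n : ℕ) :
    threeF2Coeff α (1 - α) (c + 1) (e + 2) f n = threeF2Coeff α (1 - α) c e f n *
      ((c + n) * e * (e + 1) / (c * (e + n) * (e + n + 1))) := by
  have he₀ : e ≠ 0 := by simpa using he 0
  have he₁ : e + 1 ≠ 0 := fun h => he 1 (by push_cast; linarith)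
  have hen : e + n ≠ 0 := mt eq_neg_of_add_eq_zero_left (he n)
  have hen' : e + n + 1 ≠ 0 := fun h => he (n + 1) (by push_cast; linarith)
  rw [threeF2Coeff, threeF2Coeff, show e + 2 = e + 1 + 1 by ring, poch_add_one_eq hc,
    poch_add_one_eq he₁, poch_add_one_eq he₀, add_right_comm e 1]
  field_simp

lemma sum_range_threeF2Coeff_sub_shift (hc : c ≠ 0) (he : ∀ m : ℕ, e ≠ -m)
    (hf : ∀ m : ℕ, f ≠ -m) (hcef : e + f = 1 + 2 * c) (N : ℕ) :
    ∑ k ∈ range N, (threeF2Coeff α (1 - α) c e f k - (α + e) * (1 - α + e) / (e * (e + 1)) *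
        threeF2Coeff α (1 - α) (c + 1) (e + 2) f k) =
      -((f + N - 1) / (c * (e + N))) * (N * threeF2Coeff α (1 - α) c e f N) := by
  obtain rfl : f = 1 + 2 * c - e := by linarith
  induction N with
  | zero => simp
  | succ n ih =>
    have he₀ : e ≠ 0 := by simpa using he 0
    have he₁ : e + 1 ≠ 0 := fun h => he 1 (by push_cast; linarith)
    have hen : e + n ≠ 0 := mt eq_neg_of_add_eq_zero_left (he n)
    have hen' : e + (n + 1) ≠ 0 := fun h => he (n + 1) (by push_cast; linarith)
    have hfn : 1 + 2 * c - e + n ≠ 0 := mt eq_neg_of_add_eq_zero_left (hf n)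
    rw [sum_range_succ, ih, threeF2Coeff_shift hc he, threeF2Coeff_succ, add_assoc e]
    push_cast
    field_simp
    ring

lemma threeF2_one_eq_shift (hc : 0 < c) (he : ∀ m : ℕ, e ≠ -m) (hf : ∀ m : ℕ, f ≠ -m)
    (hcef : e + f = 1 + 2 * c) :
    threeF2 α (1 - α) c e f 1 =
      (α + e) * (1 - α + e) / (e * (e + 1)) * threeF2 α (1 - α) (c + 1) (e + 2) f 1 := by
  have he₂ : ∀ m : ℕ, e + 2 ≠ -m := fun m h => he (m + 2) (by push_cast; linarith)
  have hsum : Summable (threeF2Coeff α (1 - α) c e f) :=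
    summable_threeF2Coeff he hf (by linarith)
  have hsum' : Summable (threeF2Coeff α (1 - α) (c + 1) (e + 2) f) :=
    summable_threeF2Coeff he₂ hf (by linarith)
  have hdiff := (hsum.hasSum.sub (hsum'.hasSum.mul_left
    ((α + e) * (1 - α + e) / (e * (e + 1))))).tendsto_sum_nat
  simp only [sum_range_threeF2Coeff_sub_shift hc.ne' he hf hcef] at hdiff
  have hratio : Tendsto (fun N : ℕ => -((f + N - 1) / (c * (e + N)))) atTop (𝓝 (-(1 / c))) := by
    have h := (tendsto_add_mul_div_add_mul_atTop_nhds (f - 1) e 1 one_ne_zero).const_mul (-(1 / c))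
    convert h using 2 with N
    · simp only [div_eq_mul_inv, mul_inv]
      ring
    · ring
  have hzero := hratio.mul (tendsto_natCast_mul_threeF2Coeff (a₁ := α) (a₂ := 1 - α) (a₃ := c)
    he hf (by linarith))
  rw [mul_zero] at hzero
  simpa [threeF2, sub_eq_zero] using tendsto_nhds_unique hdiff hzero

lemma threeF2_one_eq_shift_shift (hc : 0 < c) (he : ∀ m : ℕ, e ≠ -m) (hf : ∀ m : ℕ, f ≠ -m)
    (hcef : e + f = 1 + 2 * c) :
    threeF2 α (1 - α) c e f 1 =
      (α + e) / 2 * ((1 - α + e) / 2) / (e / 2 * ((e + 1) / 2)) *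
      ((α + f) / 2 * ((1 - α + f) / 2) / (f / 2 * ((f + 1) / 2))) *
      threeF2 α (1 - α) (c + 2) (e + 2) (f + 2) 1 := by
  have he₂ : ∀ m : ℕ, e + 2 ≠ -m := mod_cast add_natCast_ne_neg he 2
  have quarter (x y u v : ℝ) : x / 2 * (y / 2) / (u / 2 * (v / 2)) = x * y / (u * v) := by
    rw [div_mul_div_comm, div_mul_div_comm, div_div_div_cancel_right₀ (by norm_num)]
  rw [threeF2_one_eq_shift hc he hf hcef, threeF2_lower_comm,
    threeF2_one_eq_shift (by positivity) hf he₂ (by linarith), threeF2_lower_comm,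
    quarter, quarter, mul_assoc, add_assoc c, one_add_one_eq_two]

lemma threeF2_one_eq_poch_mul (hc : 0 < c) (he : ∀ m : ℕ, e ≠ -m) (hf : ∀ m : ℕ, f ≠ -m)
    (hcef : e + f = 1 + 2 * c) (n : ℕ) :
    threeF2 α (1 - α) c e f 1 =
      poch ((α + e) / 2) n * poch ((1 - α + e) / 2) n / (poch (e / 2) n * poch ((e + 1) / 2) n) *
      (poch ((α + f) / 2) n * poch ((1 - α + f) / 2) n / (poch (f / 2) n * poch ((f + 1) / 2) n)) *
      threeF2 α (1 - α) (c + 2 * n) (e + 2 * n) (f + 2 * n) 1 := by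
  induction n with
  | zero => simp [poch_zero]
  | succ n ih =>
    have he' : ∀ m : ℕ, e + 2 * n ≠ -m := mod_cast add_natCast_ne_neg he (2 * n)
    have hf' : ∀ m : ℕ, f + 2 * n ≠ -m := mod_cast add_natCast_ne_neg hf (2 * n)
    have cast (x : ℝ) : x + 2 * (n + 1 : ℕ) = x + 2 * n + 2 := by push_cast; ring
    have split (p q u v x y z w : ℝ) :
        p * x * (q * y) / (u * z * (v * w)) = p * q / (u * v) * (x * y / (z * w)) := by
      rw [mul_mul_mul_comm p, mul_mul_mul_comm u, mul_div_mul_comm]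
    have factor (x : ℝ) : (α + (x + 2 * n)) / 2 * ((1 - α + (x + 2 * n)) / 2) /
        ((x + 2 * n) / 2 * ((x + 2 * n + 1) / 2)) =
          ((α + x) / 2 + n) * ((1 - α + x) / 2 + n) / ((x / 2 + n) * ((x + 1) / 2 + n)) := by
      congr 2 <;> ring
    rw [ih, threeF2_one_eq_shift_shift (by positivity) he' hf' (by linarith)]
    simp only [cast, poch_succ, split, factor]
    ring

lemma tendsto_threeF2Coeff_add_atTop (α β c e f : ℝ) (k : ℕ) :
    Tendsto (fun x => threeF2Coeff α β (c + x) (e + x) (f + x) k) atTop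
      (𝓝 (if k = 0 then 1 else 0)) := by
  induction k with
  | zero => simp [threeF2Coeff_zero]
  | succ k ih =>
    have hinv (y : ℝ) : Tendsto (fun x => (y + x + k)⁻¹) atTop (𝓝 0) :=
      tendsto_inv_atTop_zero.comp (tendsto_atTop_add_const_right _ _
        (tendsto_atTop_add_const_left _ _ tendsto_id))
    have hratio : Tendsto (fun x => (c + x + k) / (e + x + k)) atTop (𝓝 1) := by
      have h := ((hinv e).const_mul (c - e)).const_add 1
      rw [mul_zero, add_zero] at h
      refine h.congr' ?_
      filter_upwards [eventually_gt_atTop (-e - k)] with x hx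
      have : e + x + k ≠ 0 := by linarith
      field_simp
      ring
    have h := ih.mul ((hratio.mul (hinv f)).const_mul ((α + k) * (β + k) / (k + 1)))
    simp only [mul_zero] at h
    simp only [k.succ_ne_zero, if_false, threeF2Coeff_succ]
    refine h.congr fun x => ?_
    simp only [div_eq_mul_inv, mul_inv]
    ring

lemma poch_mul_poch_le {c e f X : ℝ} (hc : 0 ≤ c) (hX : 0 ≤ X)
    (hXs : X ≤ e + f - c - 1) (hef : c * (e + f - c - 1) ≤ e * f) (n : ℕ) :
    poch c n * poch X n ≤ poch e n * poch f n := by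
  simp only [poch, ← prod_mul_distrib]
  refine prod_le_prod (fun i _ => by positivity) fun i _ => ?_
  have hi : (0 : ℝ) ≤ i := i.cast_nonneg
  nlinarith [mul_le_mul_of_nonneg_left hXs (add_nonneg hc hi)]

lemma abs_threeF2Coeff_le {α β X : ℝ} (hX : 0 < X) (hc : 0 < c) (he : 0 < e) (hf : 0 < f)
    (hXs : X ≤ e + f - c - 1) (hef : c * (e + f - c - 1) ≤ e * f) (n : ℕ) :
    |threeF2Coeff α β c e f n| ≤ |threeF2Coeff α β 1 1 X n| := by
  have hc' := poch_pos hc n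
  have he' := poch_pos he n
  have hf' := poch_pos hf n
  have hX' := poch_pos hX n
  have h1 := poch_pos one_pos n
  have hle : poch c n / (poch e n * poch f n) ≤ 1 / poch X n := by
    rw [div_le_div_iff₀ (by positivity) hX', one_mul]
    exact poch_mul_poch_le hc.le hX.le hXs hef n
  calc |threeF2Coeff α β c e f n|
      = |poch α n * poch β n / n !| * (poch c n / (poch e n * poch f n)) := by
        rw [← abs_of_pos (div_pos hc' (mul_pos he' hf')), ← abs_mul, threeF2Coeff]
        congr 1
        field_simp
    _ ≤ |poch α n * poch β n / n !| * (1 / poch X n) := by gcongr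
    _ = |threeF2Coeff α β 1 1 X n| := by
        rw [← abs_of_pos (one_div_pos.2 hX'), ← abs_mul, threeF2Coeff]
        congr 1
        field_simp

lemma tendsto_threeF2_one_add_atTop (α β c e f : ℝ) :
    Tendsto (fun x => threeF2 α β (c + x) (e + x) (f + x) 1) atTop (𝓝 1) := by
  set X := |α| + |β| + 1
  have hX : 0 < X := by positivity
  have hsum : Summable (threeF2Coeff α β 1 1 X) :=
    summable_threeF2Coeff (ne_neg_natCast_of_pos one_pos) (ne_neg_natCast_of_pos hX)
      (by linarith [le_abs_self α, le_abs_self β])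
  have h := tendsto_tsum_of_dominated_convergence hsum.abs
    (tendsto_threeF2Coeff_add_atTop α β c e f) ?_
  · simpa [threeF2] using h
  filter_upwards [eventually_gt_atTop (-c), eventually_gt_atTop (-e), eventually_gt_atTop (-f),
    eventually_ge_atTop (X - (e + f - c - 1)),
    eventually_ge_atTop (c * (e + f - c - 1) - e * f)] with x hc he hf hx hx' k
  exact abs_threeF2Coeff_le hX (by linarith) (by linarith) (by linarith) (by linarith)
    (by linarith) k

lemma Gamma_half_mul_Gamma_add_one_half (x : ℝ) :
    Real.Gamma (x / 2) * Real.Gamma ((x + 1) / 2) = Real.Gamma x * 2 ^ (1 - x) * √π := by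
  rw [add_div, Real.Gamma_mul_Gamma_add_half, mul_div_cancel₀ x two_ne_zero]

lemma tendsto_poch_half (α : ℝ) {x : ℝ} (hx : ∀ m : ℕ, x ≠ -m) :
    Tendsto (fun n => poch ((α + x) / 2) n * poch ((1 - α + x) / 2) n /
      (poch (x / 2) n * poch ((x + 1) / 2) n)) atTop
      (𝓝 (Real.Gamma x * 2 ^ (1 - x) * √π /
        (Real.Gamma ((α + x) / 2) * Real.Gamma ((1 - α + x) / 2)))) := by
  rw [← Gamma_half_mul_Gamma_add_one_half]
  exact tendsto_poch_mul_poch_div (by ring) (half_ne_neg_natCast hx)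
    (half_ne_neg_natCast (mod_cast add_natCast_ne_neg hx 1))

-- `Real.Gamma` is `0` at its poles, so there the quotient is `0`, as for the entire function `1/Γ`.
theorem threeF2_whipple_sum (hc : 0 < c) (he : ∀ m : ℕ, e ≠ -m) (hf : ∀ m : ℕ, f ≠ -m)
    (hcef : e + f = 1 + 2 * c) :
    threeF2 α (1 - α) c e f 1 = π * 2 ^ (1 - 2 * c) * Real.Gamma e * Real.Gamma f /
      (Real.Gamma ((α + e) / 2) * Real.Gamma ((1 - α + e) / 2) *
        (Real.Gamma ((α + f) / 2) * Real.Gamma ((1 - α + f) / 2))) := by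
  have htwo : Tendsto (fun n : ℕ => 2 * (n : ℝ)) atTop atTop :=
    tendsto_natCast_atTop_atTop.const_mul_atTop two_pos
  have h := ((tendsto_poch_half α he).mul (tendsto_poch_half α hf)).mul
    ((tendsto_threeF2_one_add_atTop α (1 - α) c e f).comp htwo)
  have hconst := tendsto_nhds_unique
    (h.congr fun n => (threeF2_one_eq_poch_mul hc he hf hcef n).symm) tendsto_const_nhds
  have hpow : (2 : ℝ) ^ (1 - e) * 2 ^ (1 - f) = 2 ^ (1 - 2 * c) := by
    rw [← Real.rpow_add two_pos]
    congr 1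
    linarith
  rw [← hconst, mul_one, div_mul_div_comm, ← hpow]
  congr 1
  linear_combination (Real.Gamma e * 2 ^ (1 - e) * Real.Gamma f * 2 ^ (1 - f)) *
    Real.mul_self_sqrt Real.pi_nonneg

end Whipple

section PowerSeries

variable {u : ℕ → ℝ}

lemma analyticOnNhd_tsum_mul_pow (hu : Summable u) :
    AnalyticOnNhd ℝ (fun x => ∑' n, u n * x ^ n) (Metric.ball 0 1) := by
  have hradius : 1 ≤ (FormalMultilinearSeries.ofScalars ℝ u).radius := by
    refine FormalMultilinearSeries.le_radius_of_summable _ (r := 1) ?_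
    simpa [FormalMultilinearSeries.ofScalars_norm] using hu.abs
  have h := ((FormalMultilinearSeries.ofScalars ℝ u).hasFPowerSeriesOnBall
    (one_pos.trans_le hradius)).mono one_pos hradius
  have hsum : (FormalMultilinearSeries.ofScalars ℝ u).sum = fun x => ∑' n, u n * x ^ n := by
    funext x
    simp [FormalMultilinearSeries.sum, mul_comm]
  rw [hsum] at h
  rw [← Metric.eball_ofReal, ENNReal.ofReal_one]
  exact h.analyticOnNhd

lemma continuousOn_tsum_mul_pow (hu : Summable u) :
    ContinuousOn (fun x : ℝ => ∑' n, u n * x ^ n) (Set.Icc (-1) 1) := by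
  refine continuousOn_tsum (fun n => by fun_prop) hu.abs fun n x hx => ?_
  rw [norm_mul, norm_pow, Real.norm_eq_abs, Real.norm_eq_abs]
  exact mul_le_of_le_one_right (abs_nonneg _) (pow_le_one₀ (abs_nonneg _) (abs_le.2 hx))

lemma analyticOnNhd_one_sub_rpow_neg (a : ℝ) :
    AnalyticOnNhd ℝ (fun z : ℝ => (1 - z) ^ (-a)) (Metric.ball 0 1) := by
  have h := (Real.one_div_one_sub_rpow_hasFPowerSeriesOnBall_zero a).analyticOnNhd
  rw [← ENNReal.ofReal_one, Metric.eball_ofReal] at h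
  refine h.congr Metric.isOpen_ball fun z hz => ?_
  have hz' : 0 ≤ 1 - z := by linarith [(abs_lt.1 (mem_ball_zero_iff.1 hz)).2]
  rw [Real.rpow_neg hz', one_div]

end PowerSeries

section QuadraticArgument

lemma three_sub_two_sqrt_two_lt_one : 3 - 2 * √2 < 1 := by
  linarith [Real.one_lt_sqrt_two]

lemma three_sub_two_sqrt_two_pos : 0 < 3 - 2 * √2 := by
  linarith [Real.sqrt_two_lt_three_halves]

lemma one_sub_sq_sub_four_mul (z : ℝ) :
    (1 - z) ^ 2 - 4 * z = (3 - 2 * √2 - z) * (3 + 2 * √2 - z) := by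
  linear_combination 4 * Real.sq_sqrt zero_le_two

lemma mapsTo_neg_four_mul_div_Icc :
    Set.MapsTo (fun z : ℝ => -4 * z / (1 - z) ^ 2) (Set.Icc (-1) (3 - 2 * √2))
      (Set.Icc (-1) 1) := by
  intro z ⟨_, hz⟩
  have hone : 0 < 1 - z := by linarith [three_sub_two_sqrt_two_lt_one]
  have hpos : 0 ≤ (3 - 2 * √2 - z) * (3 + 2 * √2 - z) :=
    mul_nonneg (by linarith) (by linarith [Real.sqrt_nonneg 2])
  rw [Set.mem_Icc, le_div_iff₀ (by positivity), div_le_one (by positivity)]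
  constructor <;> linarith [one_sub_sq_sub_four_mul z, sq_nonneg (1 + z)]

lemma mapsTo_neg_four_mul_div_ball :
    Set.MapsTo (fun z : ℝ => -4 * z / (1 - z) ^ 2) (Set.Ioo (-1) (3 - 2 * √2))
      (Metric.ball 0 1) := by
  intro z ⟨hz, hz'⟩
  have hone : 0 < 1 - z := by linarith [three_sub_two_sqrt_two_lt_one]
  have hpos : 0 < (3 - 2 * √2 - z) * (3 + 2 * √2 - z) :=
    mul_pos (by linarith) (by linarith [Real.sqrt_nonneg 2])
  have hadd : 0 < (1 + z) ^ 2 := pow_pos (by linarith) 2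
  rw [mem_ball_zero_iff, Real.norm_eq_abs, abs_lt, lt_div_iff₀ (by positivity),
    div_lt_one (by positivity)]
  constructor <;> linarith [one_sub_sq_sub_four_mul z]

end QuadraticArgument

section QuadraticTransformation

lemma hasSum_binomial_row (a s w : ℝ) {z : ℝ} (hz : |z| < 1) (k : ℕ) :
    HasSum (fun m : ℕ => s * w ^ k * (poch (a + 2 * k) m / m ! * z ^ m))
      ((1 - z) ^ (-a) * (s * (w / (1 - z) ^ 2) ^ k)) := by
  have hz' : 0 < 1 - z := by linarith [(abs_lt.1 hz).2]
  have hpow : (1 - z) ^ (-(a + 2 * k)) = (1 - z) ^ (-a) / ((1 - z) ^ 2) ^ k := by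
    rw [neg_add, Real.rpow_add hz', Real.rpow_neg hz'.le (2 * k), ← pow_mul, div_eq_mul_inv]
    exact_mod_cast rfl
  have hval : (1 - z) ^ (-a) * (s * (w / (1 - z) ^ 2) ^ k) =
      s * w ^ k * (1 - z) ^ (-(a + 2 * k)) := by
    rw [hpow, div_pow]
    ring
  rw [hval]
  exact (hasSum_poch_div_factorial_mul_pow (a + 2 * k) hz).mul_left (s * w ^ k)

lemma summable_binomial_rows (a : ℝ) {w z : ℝ} {u : ℕ → ℝ} (hu : Summable u) (hz : |z| < 1)
    (hw : |w| ≤ (1 - |z|) ^ 2) :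
    Summable fun p : ℕ × ℕ => u p.1 * w ^ p.1 * (poch (a + 2 * p.1) p.2 / p.2 ! * z ^ p.2) := by
  set g : ℕ × ℕ → ℝ := fun p =>
    |u p.1| * |w| ^ p.1 * (poch (|a| + 2 * p.1) p.2 / p.2 ! * |z| ^ p.2)
  have hrow (k : ℕ) := hasSum_binomial_row |a| |u k| |w| (by rwa [abs_abs] : |(|z|)| < 1) k
  have hbound (p : ℕ × ℕ) :
      ‖u p.1 * w ^ p.1 * (poch (a + 2 * p.1) p.2 / p.2 ! * z ^ p.2)‖ ≤ g p := by
    simp only [Real.norm_eq_abs, abs_mul, abs_div, abs_pow, Nat.abs_cast, g]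
    gcongr
    exact abs_poch_le ((abs_add_le _ _).trans_eq (by simp)) _
  have hratio : |w| / (1 - |z|) ^ 2 ≤ 1 := div_le_one_of_le₀ hw (sq_nonneg _)
  have hg : Summable g := by
    refine (summable_prod_of_nonneg fun p => (norm_nonneg _).trans (hbound p)).2
      ⟨fun k => (hrow k).summable, ?_⟩
    simp only [g, (hrow _).tsum_eq]
    refine (hu.abs.of_nonneg_of_le (fun k => by positivity) fun k => ?_).mul_left _
    exact mul_le_of_le_one_right (abs_nonneg _) (pow_le_one₀ (by positivity) hratio)
  exact hg.of_norm_bounded hbound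

lemma tsum_prod_eq_tsum_sum_antidiagonal {F : ℕ × ℕ → ℝ} (hF : Summable F) :
    ∑' p, F p = ∑' n, ∑ p ∈ antidiagonal n, F p := by
  rw [← HasAntidiagonal.sigmaAntidiagonalEquivProd.tsum_eq]
  refine (HasAntidiagonal.sigmaAntidiagonalEquivProd.summable_iff.2 hF).tsum_sigma.trans
    (tsum_congr fun n => ?_)
  rw [tsum_fintype]
  exact sum_coe_sort (antidiagonal n) F

variable {a b c z : ℝ}

lemma threeF2Coeff_mul_eq_saalschutzTerm (a b c : ℝ) (k m : ℕ) :
    threeF2Coeff (a / 2) ((a + 1) / 2) (1 + a - b - c) (1 + a - b) (1 + a - c) k * (-4) ^ k *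
        (poch (a + 2 * k) m / m !) = saalschutzTerm a b c (k + m) k / (k + m)! := by
  have hpoch : poch a (k + m + k) =
      4 ^ k * poch (a / 2) k * poch ((a + 1) / 2) k * poch (a + 2 * k) m := by
    rw [show k + m + k = 2 * k + m by ring, poch_add, poch_two_mul]
    push_cast
    rfl
  rw [threeF2Coeff, saalschutzTerm, hpoch, Nat.cast_add_choose, neg_pow]
  have : ((k + m)! : ℝ) ≠ 0 := by positivity
  field_simp

lemma sum_antidiagonal_eq_threeF2Coeff (hb : ∀ m : ℕ, 1 + a - b ≠ -m)
    (hc : ∀ m : ℕ, 1 + a - c ≠ -m) (n : ℕ) :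
    ∑ p ∈ antidiagonal n, threeF2Coeff (a / 2) ((a + 1) / 2) (1 + a - b - c) (1 + a - b)
        (1 + a - c) p.1 * (-4 * z) ^ p.1 * (poch (a + 2 * p.1) p.2 / p.2 ! * z ^ p.2) =
      threeF2Coeff a b c (1 + a - b) (1 + a - c) n * z ^ n := by
  calc _ = ∑ p ∈ antidiagonal n, saalschutzTerm a b c n p.1 / n ! * z ^ n := by
        refine sum_congr rfl fun p hp => ?_
        obtain rfl := mem_antidiagonal.1 hp
        rw [← threeF2Coeff_mul_eq_saalschutzTerm, mul_pow, pow_add]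
        ring
    _ = _ := by
        rw [← sum_mul, ← sum_div, Nat.sum_antidiagonal_eq_sum_range_succ_mk, Nat.succ_eq_add_one,
          sum_saalschutzTerm hb hc, threeF2Coeff, div_div]

lemma summable_threeF2Coeff_quadratic (hb : ∀ m : ℕ, 1 + a - b ≠ -m)
    (hc : ∀ m : ℕ, 1 + a - c ≠ -m) : Summable
    (threeF2Coeff (a / 2) ((a + 1) / 2) (1 + a - b - c) (1 + a - b) (1 + a - c)) :=
  summable_threeF2Coeff hb hc (by linarith)

lemma threeF2_quadratic_transformation_of_small (hb : ∀ m : ℕ, 1 + a - b ≠ -m)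
    (hc : ∀ m : ℕ, 1 + a - c ≠ -m) (hz : |z| < 1) (hz' : 4 * |z| ≤ (1 - |z|) ^ 2) :
    threeF2 a b c (1 + a - b) (1 + a - c) z = (1 - z) ^ (-a) *
      threeF2 (a / 2) ((a + 1) / 2) (1 + a - b - c) (1 + a - b) (1 + a - c)
        (-4 * z / (1 - z) ^ 2) := by
  have hF := summable_binomial_rows a (w := -4 * z) (summable_threeF2Coeff_quadratic hb hc) hz
    (by simpa [abs_mul] using hz')
  calc threeF2 a b c (1 + a - b) (1 + a - c) z
      = ∑' n, ∑ p ∈ antidiagonal n, _ :=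
        (tsum_congr fun n => sum_antidiagonal_eq_threeF2Coeff hb hc n).symm
    _ = ∑' p : ℕ × ℕ, _ := (tsum_prod_eq_tsum_sum_antidiagonal hF).symm
    _ = _ := by
        rw [hF.tsum_prod]
        simp only [(hasSum_binomial_row a _ _ hz _).tsum_eq]
        rw [tsum_mul_left, threeF2]

lemma threeF2_quadratic_transformation_eventually (hb : ∀ m : ℕ, 1 + a - b ≠ -m)
    (hc : ∀ m : ℕ, 1 + a - c ≠ -m) :
    threeF2 a b c (1 + a - b) (1 + a - c) =ᶠ[𝓝 0] fun z => (1 - z) ^ (-a) *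
      threeF2 (a / 2) ((a + 1) / 2) (1 + a - b - c) (1 + a - b) (1 + a - c)
        (-4 * z / (1 - z) ^ 2) := by
  filter_upwards [Metric.ball_mem_nhds (0 : ℝ) (by norm_num : (0 : ℝ) < 1 / 6)] with z hz
  rw [mem_ball_zero_iff, Real.norm_eq_abs] at hz
  exact threeF2_quadratic_transformation_of_small hb hc (by linarith) (by nlinarith [abs_nonneg z])

lemma threeF2_quadratic_transformation_of_mem_Ioo (hb : ∀ m : ℕ, 1 + a - b ≠ -m)
    (hc : ∀ m : ℕ, 1 + a - c ≠ -m) (hs : 2 * (b + c) < 2 + a) :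
    Set.EqOn (threeF2 a b c (1 + a - b) (1 + a - c))
      (fun z => (1 - z) ^ (-a) *
        threeF2 (a / 2) ((a + 1) / 2) (1 + a - b - c) (1 + a - b) (1 + a - c)
          (-4 * z / (1 - z) ^ 2))
      (Set.Ioo (-1) (3 - 2 * √2)) := by
  have hball : Set.Ioo (-1) (3 - 2 * √2) ⊆ Metric.ball 0 1 := fun z hz => by
    rw [mem_ball_zero_iff, Real.norm_eq_abs, abs_lt]
    exact ⟨hz.1, hz.2.trans three_sub_two_sqrt_two_lt_one⟩
  have harg : AnalyticOnNhd ℝ (fun z : ℝ => -4 * z / (1 - z) ^ 2) (Set.Ioo (-1) (3 - 2 * √2)) :=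
    fun z hz => by
      have : 1 - z ≠ 0 := by linarith [hz.2, three_sub_two_sqrt_two_lt_one]
      fun_prop (disch := positivity)
  exact AnalyticOnNhd.eqOn_of_preconnected_of_eventuallyEq
    ((analyticOnNhd_tsum_mul_pow (summable_threeF2Coeff hb hc (by linarith))).mono hball)
    (((analyticOnNhd_one_sub_rpow_neg a).mono hball).mul
      ((analyticOnNhd_tsum_mul_pow (summable_threeF2Coeff_quadratic hb hc)).comp harg
        mapsTo_neg_four_mul_div_ball))
    isPreconnected_Ioo ⟨by norm_num, three_sub_two_sqrt_two_pos⟩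
    (threeF2_quadratic_transformation_eventually hb hc)

theorem threeF2_quadratic_transformation (hb : ∀ m : ℕ, 1 + a - b ≠ -m)
    (hc : ∀ m : ℕ, 1 + a - c ≠ -m) (hs : 2 * (b + c) < 2 + a)
    (hz : z ∈ Set.Icc (-1) (3 - 2 * √2)) :
    threeF2 a b c (1 + a - b) (1 + a - c) z = (1 - z) ^ (-a) *
      threeF2 (a / 2) ((a + 1) / 2) (1 + a - b - c) (1 + a - b) (1 + a - c)
        (-4 * z / (1 - z) ^ 2) := by
  have hone (z : ℝ) (hz : z ∈ Set.Icc (-1) (3 - 2 * √2)) : 1 - z ≠ 0 := by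
    linarith [hz.2, three_sub_two_sqrt_two_lt_one]
  have hleft : ContinuousOn (threeF2 a b c (1 + a - b) (1 + a - c))
      (Set.Icc (-1) (3 - 2 * √2)) :=
    (continuousOn_tsum_mul_pow (summable_threeF2Coeff hb hc (by linarith))).mono
      (Set.Icc_subset_Icc_right three_sub_two_sqrt_two_lt_one.le)
  have hpow : ContinuousOn (fun z : ℝ => (1 - z) ^ (-a)) (Set.Icc (-1) (3 - 2 * √2)) :=
    ContinuousOn.rpow_const (by fun_prop) fun z hz => .inl (hone z hz)
  have harg : ContinuousOn (fun z : ℝ => -4 * z / (1 - z) ^ 2) (Set.Icc (-1) (3 - 2 * √2)) :=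
    ContinuousOn.div (by fun_prop) (by fun_prop) fun z hz => pow_ne_zero _ (hone z hz)
  have hright := (continuousOn_tsum_mul_pow (summable_threeF2Coeff_quadratic hb hc)).comp harg
    mapsTo_neg_four_mul_div_Icc
  exact (threeF2_quadratic_transformation_of_mem_Ioo hb hc hs).of_subset_closure hleft
    (hpow.mul hright) Set.Ioo_subset_Icc_self
    (closure_Ioo (by linarith [three_sub_two_sqrt_two_pos])).ge hz

end QuadraticTransformation

lemma Gamma_add_one_mul_Gamma_one_sub {a : ℝ} (ha : a ≠ 0) :
    Real.Gamma (a + 1) * Real.Gamma (1 - a) = π * a / Real.sin (π * a) := by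
  rw [Real.Gamma_add_one ha, mul_assoc, Real.Gamma_mul_Gamma_one_sub, ← mul_div_assoc, mul_comm a]

lemma threeF2_half_neg_one_eq_quadratic {a : ℝ} (h₁ : ∀ m : ℕ, 1 - a ≠ -m)
    (h₂ : ∀ m : ℕ, a + 1 ≠ -m) :
    threeF2 (1/2) (1/2 - a) (a + 1/2) (1 - a) (a + 1) (-1) =
      (√2)⁻¹ * threeF2 (1/4) (1 - 1/4) (1/2) (a + 1) (1 - a) 1 := by
  have hb : 1 + 1/2 - (1/2 - a) = a + 1 := by ring
  have hc : 1 + 1/2 - (a + 1/2) = 1 - a := by ring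
  have h := threeF2_quadratic_transformation (a := 1/2) (b := 1/2 - a) (c := a + 1/2) (z := -1)
    (hb ▸ h₂) (hc ▸ h₁) (by linarith) ⟨le_rfl, by linarith [three_sub_two_sqrt_two_pos]⟩
  rw [hb, hc, threeF2_lower_comm] at h
  rw [h, Real.sqrt_eq_rpow, ← Real.rpow_neg zero_le_two]
  congr 2 <;> norm_num

theorem threeF2_K4_value_general {a : ℝ} (ha : ∀ n : ℤ, a ≠ n) :
    HasSum (fun n : ℕ => poch (1/2) n * poch (1/2 - a) n * poch (a + 1/2) n
        / (poch (1 - a) n * poch (a + 1) n * (Nat.factorial n)) * (-1 : ℝ) ^ n)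
      (Real.pi^2 * a * (1 / Real.sin (Real.pi * a))
        / (Real.sqrt 2 * Real.Gamma (5/8 - a/2) * Real.Gamma (7/8 - a/2)
            * Real.Gamma (a/2 + 5/8) * Real.Gamma (a/2 + 7/8))) := by
  have h₁ : ∀ m : ℕ, 1 - a ≠ -m := fun m h => ha (m + 1) (by push_cast; linarith)
  have h₂ : ∀ m : ℕ, a + 1 ≠ -m := fun m h => ha (-(m + 1)) (by push_cast; linarith)
  have hsum : Summable (threeF2Coeff (1/2) (1/2 - a) (a + 1/2) (1 - a) (a + 1)) :=
    summable_threeF2Coeff h₁ h₂ (by linarith)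
  have hterms : Summable fun n => threeF2Coeff (1/2) (1/2 - a) (a + 1/2) (1 - a) (a + 1) n *
    (-1) ^ n := hsum.abs.of_norm_bounded fun n => by simp
  refine hterms.hasSum_iff.2 ?_
  rw [← threeF2, threeF2_half_neg_one_eq_quadratic h₁ h₂,
    threeF2_whipple_sum one_half_pos h₂ h₁ (by ring), mul_assoc (π * _),
    Gamma_add_one_mul_Gamma_one_sub (mod_cast ha 0),
    show (1/4 + (a + 1)) / 2 = a/2 + 5/8 by ring, show (1 - 1/4 + (a + 1)) / 2 = a/2 + 7/8 by ring,
    show (1/4 + (1 - a)) / 2 = 5/8 - a/2 by ring, show (1 - 1/4 + (1 - a)) / 2 = 7/8 - a/2 by ring,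
    mul_one_div_cancel two_ne_zero, sub_self, Real.rpow_zero]
  ring

theorem threeF2_K4_value (a : ℝ) (ha0 : 0 < a) (ha1 : a < 1/2) :
    ∑' n : ℕ,
        poch (1/2) n * poch (1/2 - a) n * poch (a + 1/2) n
          / (poch (1 - a) n * poch (a + 1) n * (Nat.factorial n)) * (-1 : ℝ) ^ n =
      Real.pi^2 * a * (1 / Real.sin (Real.pi * a))
        / (Real.sqrt 2 * Real.Gamma (5/8 - a/2) * Real.Gamma (7/8 - a/2)
            * Real.Gamma (a/2 + 5/8) * Real.Gamma (a/2 + 7/8)) :=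
  (threeF2_K4_value_general fun n hn => by
    have hpos : (0 : ℝ) < n := hn ▸ ha0
    have hlt : (n : ℝ) < 1 := by linarith
    norm_cast at hpos hlt
    omega).tsum_eq
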